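/- Let T : ℝ^d → ℝ^d be γ-contractive with respect to a norm ‖·‖_c, with fixed point θ*, and let (w_t)_{t≥0} be i.i.d. zero-mean ℝ^d-valued random vectors with E‖w₀‖² < ∞. Then there exists ᾱ' > 0 such that for every constant stepsize α ∈ (0, ᾱ']: (i) there exists a unique stationary probability measure μ_α with finite second moment for the SA Markov kernel; (ii) for every initial distribution of θ₀ with finite second moment there is a constant c (independent of α and t) such that W₂²(law(θ_t), μ_α) ≤ c · (1 − α(1 − √γ))^t for all t ≥ 0, where W₂ is taken with respect to ‖·‖_c; and (iii) there is a constant C independent of α such that ∫ ‖x − θ*‖₂² dμ_α(x) ≤ C α. -/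

import Mathlib

open MeasureTheory ProbabilityTheory

noncomputable section

/-- A function on `ℝ^d` satisfying the axioms of a norm. -/
structure IsNormLike {V : Type*} [AddCommGroup V] [Module ℝ V] (c : V → ℝ) : Prop where
  add_le : ∀ x y, c (x + y) ≤ c x + c y
  smul_eq : ∀ (r : ℝ) (x : V), c (r • x) = |r| * c x
  pos : ∀ x, x ≠ 0 → 0 < c x

/-- `π` is a coupling of `μ` and `ν`. -/
def IsCoupling {X : Type*} [MeasurableSpace X] (π : Measure (X × X)) (μ ν : Measure X) : Prop :=
  π.map Prod.fst = μ ∧ π.map Prod.snd = ν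

/-- Squared Wasserstein-2 distance with respect to the norm-like function `c`. -/
def W2sq {X : Type*} [MeasurableSpace X] [AddGroup X] (c : X → ℝ) (μ ν : Measure X) : ℝ :=
  sInf { r : ℝ | ∃ π : Measure (X × X), IsCoupling π μ ν ∧
    Integrable (fun p => (c (p.1 - p.2)) ^ 2) π ∧ r = ∫ p, (c (p.1 - p.2)) ^ 2 ∂π }

/-- One step of the SA Markov kernel with stepsize `α` and noise distribution `νw`,
at the level of laws. -/
def saStep {d : ℕ} (T : EuclideanSpace ℝ (Fin d) → EuclideanSpace ℝ (Fin d)) (α : ℝ)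
    (νw : Measure (EuclideanSpace ℝ (Fin d))) (μ : Measure (EuclideanSpace ℝ (Fin d))) :
    Measure (EuclideanSpace ℝ (Fin d)) :=
  Measure.map (fun p => p.1 + α • (T p.1 - p.1 + p.2)) (μ.prod νw)

open Filter
open scoped Topology ENNReal

namespace IsNormLike

variable {V : Type*} [AddCommGroup V] [Module ℝ V] {c : V → ℝ}

theorem map_zero (hc : IsNormLike c) : c 0 = 0 := by
  simpa using hc.smul_eq 0 0

theorem map_neg (hc : IsNormLike c) (x : V) : c (-x) = c x := by
  simpa using hc.smul_eq (-1) x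

theorem nonneg (hc : IsNormLike c) (x : V) : 0 ≤ c x := by
  rcases eq_or_ne x 0 with rfl | h
  · exact hc.map_zero.ge
  · exact (hc.pos x h).le

theorem map_sum_le (hc : IsNormLike c) {ι : Type*} (s : Finset ι) (f : ι → V) :
    c (∑ i ∈ s, f i) ≤ ∑ i ∈ s, c (f i) :=
  Finset.le_sum_of_subadditive c hc.map_zero.le hc.add_le s f

theorem map_add_sq_le (hc : IsNormLike c) (x y : V) :
    c (x + y) ^ 2 ≤ 2 * c x ^ 2 + 2 * c y ^ 2 := by
  have h := pow_le_pow_left₀ (hc.nonneg _) (hc.add_le x y) 2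
  nlinarith [sq_nonneg (c x - c y)]

theorem map_sub_sq_le (hc : IsNormLike c) (x y : V) :
    c (x - y) ^ 2 ≤ 2 * c x ^ 2 + 2 * c y ^ 2 := by
  simpa [sub_eq_add_neg, hc.map_neg] using hc.map_add_sq_le x (-y)

end IsNormLike

section NormEquivalence

variable {E : Type*} [NormedAddCommGroup E] [NormedSpace ℝ E] [FiniteDimensional ℝ E] {c : E → ℝ}

theorem IsNormLike.exists_le_norm (hc : IsNormLike c) : ∃ K > 0, ∀ x, c x ≤ K * ‖x‖ := by
  let b := Module.finBasis ℝ E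
  let L : E →L[ℝ] (Fin (Module.finrank ℝ E) → ℝ) :=
    LinearMap.toContinuousLinearMap b.equivFun.toLinearMap
  have hS : 0 ≤ ∑ i, c (b i) := Finset.sum_nonneg fun i _ => hc.nonneg _
  refine ⟨‖L‖ * ∑ i, c (b i) + 1, by positivity, fun x => ?_⟩
  calc c x = c (∑ i, L x i • b i) := by
        congr 1; exact (b.sum_equivFun x).symm
    _ ≤ ∑ i, c (L x i • b i) := hc.map_sum_le _ _
    _ ≤ ∑ i, (‖L‖ * ‖x‖) * c (b i) := by
        refine Finset.sum_le_sum fun i _ => ?_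
        rw [hc.smul_eq]
        exact mul_le_mul_of_nonneg_right ((norm_le_pi_norm (L x) i).trans (L.le_opNorm x))
          (hc.nonneg _)
    _ = (‖L‖ * ∑ i, c (b i)) * ‖x‖ := by rw [← Finset.mul_sum]; ring
    _ ≤ (‖L‖ * ∑ i, c (b i) + 1) * ‖x‖ := by nlinarith [norm_nonneg x]

theorem IsNormLike.continuous (hc : IsNormLike c) : Continuous c := by
  obtain ⟨K, hK, h⟩ := hc.exists_le_norm
  refine (LipschitzWith.of_le_add_mul K.toNNReal fun x y => ?_).continuous
  rw [Real.coe_toNNReal K hK.le, dist_eq_norm]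
  have := hc.add_le y (x - y)
  rw [add_sub_cancel] at this
  linarith [h (x - y)]

theorem IsNormLike.exists_norm_le (hc : IsNormLike c) : ∃ k > 0, ∀ x, ‖x‖ ≤ k * c x := by
  have hcpt : IsCompact (Metric.sphere (0 : E) 1) := isCompact_sphere 0 1
  rcases (Metric.sphere (0 : E) 1).eq_empty_or_nonempty with he | hne
  · refine ⟨1, one_pos, fun x => ?_⟩
    rcases eq_or_ne x 0 with rfl | hx
    · simp [hc.map_zero]
    · have : ‖x‖⁻¹ • x ∈ Metric.sphere (0 : E) 1 := by
        simp [norm_smul, hx]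
      simp [he] at this
  · obtain ⟨u, hu, hmin⟩ := hcpt.exists_isMinOn hne hc.continuous.continuousOn
    have hu0 : u ≠ 0 := by
      rintro rfl
      simp at hu
    have hcu := hc.pos u hu0
    refine ⟨(c u)⁻¹, inv_pos.2 hcu, fun x => ?_⟩
    rcases eq_or_ne x 0 with rfl | hx
    · simp [hc.map_zero]
    · have hm : ‖x‖⁻¹ • x ∈ Metric.sphere (0 : E) 1 := by
        simp [norm_smul, hx]
      have h : c u ≤ c (‖x‖⁻¹ • x) := hmin hm
      rw [hc.smul_eq, abs_of_nonneg (by positivity), inv_mul_eq_div,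
        le_div_iff₀ (norm_pos_iff.2 hx)] at h
      rw [inv_mul_eq_div, le_div_iff₀ hcu]
      linarith

end NormEquivalence

theorem MeasureTheory.MeasurePreserving.integral_comp_of_aestronglyMeasurable {X Y G : Type*}
    [MeasurableSpace X] [MeasurableSpace Y] [NormedAddCommGroup G] [NormedSpace ℝ G]
    {μ : Measure X} {ν : Measure Y} {f : X → Y} (hf : MeasurePreserving f μ ν) {g : Y → G}
    (hg : AEStronglyMeasurable g ν) : ∫ x, g (f x) ∂μ = ∫ y, g y ∂ν := by
  rw [← hf.map_eq] at hg ⊢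
  exact (integral_map hf.aemeasurable hg).symm

section BackwardIteration

variable {S E : Type*}

/-- The backward iteration `F_{ω 0} ∘ F_{ω 1} ∘ ⋯ ∘ F_{ω (n-1)}` of random maps
`F_w = fun x => F x w`. -/
def backIter (F : S → E → S) : ℕ → S → (ℕ → E) → S
  | 0, x, _ => x
  | n + 1, x, ω => F (backIter F n x fun k => ω (k + 1)) (ω 0)

variable [MeasurableSpace S] [MeasurableSpace E]

theorem measurable_backIter {F : S → E → S} (hF : Measurable fun p : S × E => F p.1 p.2) (n : ℕ) :
    Measurable fun p : S × (ℕ → E) => backIter F n p.1 p.2 := by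
  induction n with
  | zero => exact measurable_fst
  | succ n ih =>
    have h : Measurable fun p : S × (ℕ → E) => (p.1, fun k => p.2 (k + 1)) := by fun_prop
    exact hF.comp ((ih.comp h).prodMk (by fun_prop))

theorem measurePreserving_shift_eval_zero (ν : Measure E) [IsProbabilityMeasure ν] :
    MeasurePreserving (fun ω : ℕ → E => ((fun k => ω (k + 1)), ω 0))
      (Measure.infinitePi fun _ => ν) ((Measure.infinitePi fun _ => ν).prod ν) := by
  let cons : (ℕ → E) × E → ℕ → E := fun p n => Nat.casesOn n p.2 p.1
  have hcons : Measurable cons := by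
    refine measurable_pi_lambda _ fun n => ?_
    cases n with
    | zero => exact measurable_snd
    | succ n => exact (measurable_pi_apply n).comp measurable_fst
  have hmeas : Measurable fun ω : ℕ → E => ((fun k => ω (k + 1)), ω 0) := by fun_prop
  have hlaw : ((Measure.infinitePi fun _ => ν).prod ν).map cons
      = Measure.infinitePi fun _ : ℕ => ν := by
    refine Measure.eq_infinitePi _ fun s t ht => ?_
    classical
    let N := s.sup id + 1
    let t' : ℕ → Set E := fun i => if i ∈ s then t i else Set.univ
    have ht' : ∀ i, MeasurableSet (t' i) := fun i => by
      by_cases h : i ∈ s <;> simp [t', h, ht i]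
    have hsub : s ⊆ Finset.range (N + 1) := fun i hi => by
      have : i ≤ s.sup id := Finset.le_sup (f := id) hi
      simp only [Finset.mem_range, N]; omega
    have hpre : cons ⁻¹' (Set.pi s t)
        = (Set.pi (Finset.range N : Finset ℕ) fun i => t' (i + 1)) ×ˢ t' 0 := by
      ext p
      simp only [Set.mem_preimage, Set.mem_pi, Finset.mem_coe, Set.mem_prod, Finset.mem_range]
      constructor
      · intro h
        refine ⟨fun i _ => ?_, ?_⟩
        · by_cases hi : i + 1 ∈ s
          · simpa [t', hi] using h _ hi
          · simp [t', hi]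
        · by_cases hi : 0 ∈ s
          · simpa [t', hi, cons] using h _ hi
          · simp [t', hi]
      · rintro ⟨h1, h0⟩ i hi
        cases i with
        | zero => simpa [t', hi, cons] using h0
        | succ i =>
          have hlt := Finset.mem_range.1 (hsub hi)
          simpa [t', hi] using h1 i (by omega)
    rw [Measure.map_apply hcons (MeasurableSet.pi s.countable_toSet fun i _ => ht i), hpre,
      Measure.prod_prod, Measure.infinitePi_pi _ fun i _ => ht' _,
      ← Finset.prod_range_succ' (fun i => ν (t' i)) N, ← Finset.prod_subset hsub]
    · exact Finset.prod_congr rfl fun i hi => by simp [t', hi]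
    · intro i _ hi
      simp [t', hi]
  refine ⟨hmeas, ?_⟩
  conv_lhs => rw [← hlaw, Measure.map_map hmeas hcons]
  exact Measure.map_id

theorem measurePreserving_shift (ν : Measure E) [IsProbabilityMeasure ν] :
    MeasurePreserving (fun (ω : ℕ → E) k => ω (k + 1))
      (Measure.infinitePi fun _ => ν) (Measure.infinitePi fun _ => ν) :=
  measurePreserving_fst.comp (measurePreserving_shift_eval_zero ν)

theorem measurePreserving_backIter {F : S → E → S} (hF : Measurable fun p : S × E => F p.1 p.2)
    (ν : Measure E) [IsProbabilityMeasure ν] (μ : Measure S) [IsProbabilityMeasure μ] (n : ℕ) :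
    MeasurePreserving (fun p : S × (ℕ → E) => backIter F n p.1 p.2)
      (μ.prod (Measure.infinitePi fun _ => ν))
      ((fun ρ : Measure S => (ρ.prod ν).map fun p => F p.1 p.2)^[n] μ) := by
  induction n with
  | zero => exact measurePreserving_fst
  | succ n ih =>
    rw [Function.iterate_succ_apply']
    have hprob : IsProbabilityMeasure
        ((fun ρ : Measure S => (ρ.prod ν).map fun p => F p.1 p.2)^[n] μ) :=
      ih.map_eq ▸ Measure.isProbabilityMeasure_map ih.aemeasurable
    have h1 := (MeasurePreserving.id μ).prod (measurePreserving_shift_eval_zero ν)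
    have h2 := (measurePreserving_prodAssoc μ (Measure.infinitePi fun _ : ℕ => ν) ν).symm
    have h3 := ih.prod (MeasurePreserving.id ν)
    exact (hF.measurePreserving _).comp (h3.comp (h2.comp h1))

end BackwardIteration

section StochasticApproximation

variable {E : Type*} [NormedAddCommGroup E]

/-- One stochastic approximation step from `x` with noise `w`. -/
def saMap [Module ℝ E] (T : E → E) (α : ℝ) (x w : E) : E :=
  x + α • (T x - x + w)

section Contraction

variable [Module ℝ E] {c : E → ℝ} {T : E → E} {γ α : ℝ} {θstar : E}

theorem c_saMap_sub_le (hc : IsNormLike c) (hT : ∀ x y, c (T x - T y) ≤ γ * c (x - y))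
    (hα0 : 0 ≤ α) (hα1 : α ≤ 1) (x y w : E) :
    c (saMap T α x w - saMap T α y w) ≤ (1 - α * (1 - γ)) * c (x - y) := by
  have h : saMap T α x w - saMap T α y w = (1 - α) • (x - y) + α • (T x - T y) := by
    simp only [saMap]; module
  have h1 := hc.add_le ((1 - α) • (x - y)) (α • (T x - T y))
  rw [hc.smul_eq, hc.smul_eq, abs_of_nonneg hα0, abs_of_nonneg (sub_nonneg.2 hα1)] at h1
  rw [h]
  linarith [mul_le_mul_of_nonneg_left (hT x y) hα0]

theorem contraction_factor_nonneg (hγ : 0 ≤ γ) (hα0 : 0 ≤ α) (hα1 : α ≤ 1) :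
    0 ≤ 1 - α * (1 - γ) := by
  nlinarith [mul_nonneg hα0 hγ]

theorem c_backIter_saMap_sub_le (hc : IsNormLike c) (hγ : 0 ≤ γ)
    (hT : ∀ x y, c (T x - T y) ≤ γ * c (x - y)) (hα0 : 0 ≤ α) (hα1 : α ≤ 1) (n : ℕ) (x y : E)
    (ω : ℕ → E) :
    c (backIter (saMap T α) n x ω - backIter (saMap T α) n y ω)
      ≤ (1 - α * (1 - γ)) ^ n * c (x - y) := by
  induction n generalizing ω with
  | zero => simp [backIter]
  | succ n ih =>
    refine (c_saMap_sub_le hc hT hα0 hα1 _ _ _).trans ?_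
    rw [pow_succ', mul_assoc]
    exact mul_le_mul_of_nonneg_left (ih _) (contraction_factor_nonneg hγ hα0 hα1)

theorem c_backIter_saMap_succ_sub_le (hc : IsNormLike c) (hγ : 0 ≤ γ)
    (hT : ∀ x y, c (T x - T y) ≤ γ * c (x - y)) (hα0 : 0 ≤ α) (hα1 : α ≤ 1)
    (hfix : T θstar = θstar) (n : ℕ) (ω : ℕ → E) :
    c (backIter (saMap T α) (n + 1) θstar ω - backIter (saMap T α) n θstar ω)
      ≤ (1 - α * (1 - γ)) ^ n * (α * c (ω n)) := by
  induction n generalizing ω with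
  | zero => simp [backIter, saMap, hfix, hc.smul_eq, abs_of_nonneg hα0]
  | succ n ih =>
    refine (c_saMap_sub_le hc hT hα0 hα1 _ _ _).trans ?_
    rw [pow_succ', mul_assoc]
    exact mul_le_mul_of_nonneg_left (ih _) (contraction_factor_nonneg hγ hα0 hα1)

theorem c_deviation_sq_le (hc : IsNormLike c) (hγ0 : 0 ≤ γ) (hγ1 : γ < 1)
    (hT : ∀ x y, c (T x - T y) ≤ γ * c (x - y)) (hfix : T θstar = θstar)
    (hα0 : 0 ≤ α) (hα1 : α ≤ 1) (x y w : E) :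
    c (saMap T α x w - θstar - saMap (fun _ : E => (0 : E)) α y w) ^ 2
      ≤ (1 - α * (1 - γ)) * c (x - θstar - y) ^ 2
        + (α * (1 - γ)) * ((γ / (1 - γ)) ^ 2 * c y ^ 2) := by
  have hγ' : 0 < 1 - γ := sub_pos.2 hγ1
  have h : saMap T α x w - θstar - saMap (fun _ : E => (0 : E)) α y w
      = (1 - α) • (x - θstar - y) + α • (T x - T θstar) := by
    rw [hfix]; simp only [saMap]; module
  have h1 := hc.add_le ((1 - α) • (x - θstar - y)) (α • (T x - T θstar))
  rw [hc.smul_eq, hc.smul_eq, abs_of_nonneg hα0, abs_of_nonneg (sub_nonneg.2 hα1), ← h] at h1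
  have h2 : c (x - θstar) ≤ c (x - θstar - y) + c y := by
    simpa using hc.add_le (x - θstar - y) y
  set a := c (x - θstar - y)
  have h3 : c (T x - T θstar) ≤ γ * (a + c y) :=
    (hT _ _).trans (mul_le_mul_of_nonneg_left h2 hγ0)
  set b := γ / (1 - γ) * c y with hb
  have hb' : γ * c y = (1 - γ) * b := by rw [hb]; field_simp
  have h4 : c (saMap T α x w - θstar - saMap (fun _ : E => (0 : E)) α y w)
      ≤ (1 - α * (1 - γ)) * a + α * (1 - γ) * b := by
    have := mul_le_mul_of_nonneg_left h3 hα0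
    have h5 : α * (γ * (a + c y)) = α * γ * a + α * (1 - γ) * b := by
      rw [mul_add, hb']; ring
    linarith
  have h6 := pow_le_pow_left₀ (hc.nonneg _) h4 2
  have hs := contraction_factor_nonneg hγ0 hα0 hα1
  have hs' : 0 ≤ α * (1 - γ) := by positivity
  refine h6.trans ?_
  rw [← mul_pow, ← hb]
  nlinarith [mul_nonneg (mul_nonneg hs hs') (sq_nonneg (a - b))]

end Contraction

theorem integrable_norm_sub_sq [MeasurableSpace E] [BorelSpace E]
    [SecondCountableTopology E] {μ : Measure E} [IsFiniteMeasure μ] {a : E}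
    (h : Integrable (fun x => ‖x - a‖ ^ 2) μ) (b : E) : Integrable (fun x => ‖x - b‖ ^ 2) μ := by
  refine ((h.const_mul 2).add (integrable_const (2 * ‖a - b‖ ^ 2))).mono'
    (Continuous.aestronglyMeasurable (by fun_prop)) (ae_of_all _ fun x => ?_)
  rw [Real.norm_of_nonneg (by positivity)]
  have h1 : ‖x - b‖ ≤ ‖x - a‖ + ‖a - b‖ := norm_sub_le_norm_sub_add_norm_sub x a b
  simp only [Pi.add_apply]
  nlinarith [pow_le_pow_left₀ (norm_nonneg _) h1 2, sq_nonneg (‖x - a‖ - ‖a - b‖)]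

theorem measurable_saMap [NormedSpace ℝ E] [SecondCountableTopology E] [MeasurableSpace E]
    [BorelSpace E] {T : E → E} (hTc : Continuous T) (α : ℝ) :
    Measurable fun p : E × E => saMap T α p.1 p.2 := by
  have : Continuous fun p : E × E => saMap T α p.1 p.2 := by unfold saMap; fun_prop
  exact this.measurable

variable [InnerProductSpace ℝ E] [FiniteDimensional ℝ E]
  {c : E → ℝ} {T : E → E} {γ α : ℝ} {θstar : E}

theorem continuous_of_c_contraction (hc : IsNormLike c) (hγ : 0 ≤ γ)
    (hT : ∀ x y, c (T x - T y) ≤ γ * c (x - y)) : Continuous T := by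
  obtain ⟨K, hK, hcK⟩ := hc.exists_le_norm
  obtain ⟨k, hk, hck⟩ := hc.exists_norm_le
  refine (LipschitzWith.of_dist_le_mul (K := (k * (γ * K)).toNNReal) fun x y => ?_).continuous
  rw [Real.coe_toNNReal _ (by positivity), dist_eq_norm, dist_eq_norm]
  calc ‖T x - T y‖ ≤ k * c (T x - T y) := hck _
    _ ≤ k * (γ * (K * ‖x - y‖)) := by
        gcongr
        exact (hT x y).trans (mul_le_mul_of_nonneg_left (hcK _) hγ)
    _ = k * (γ * K) * ‖x - y‖ := by ring

variable [MeasurableSpace E] {ν : Measure E}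

theorem integral_norm_add_sq_prod {Ω : Type*} [MeasurableSpace Ω] {P : Measure Ω}
    [IsProbabilityMeasure P] [IsProbabilityMeasure ν] {Y : Ω → E}
    (hY : MemLp Y 2 P) (hν : MemLp id 2 ν) (hmean : ∫ x, x ∂ν = 0) (a b : ℝ) :
    ∫ p, ‖a • Y p.1 + b • p.2‖ ^ 2 ∂(P.prod ν)
      = a ^ 2 * ∫ ω, ‖Y ω‖ ^ 2 ∂P + b ^ 2 * ∫ w, ‖w‖ ^ 2 ∂ν := by
  have hY1 : MemLp (fun p : Ω × E => Y p.1) 2 (P.prod ν) :=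
    hY.comp_measurePreserving measurePreserving_fst
  have hw1 : MemLp (fun p : Ω × E => p.2) 2 (P.prod ν) :=
    hν.comp_measurePreserving measurePreserving_snd
  have hwint : Integrable (fun w : E => w) ν := hν.integrable (by norm_num)
  have hsum := ((hY1.const_smul a).add (hw1.const_smul b)).integrable_norm_pow (p := 2) (by norm_num)
  have hY2 : Integrable (fun ω => ‖Y ω‖ ^ 2) P := hY.integrable_norm_pow (p := 2) (by norm_num)
  have hw2 : Integrable (fun w : E => ‖w‖ ^ 2) ν := hν.integrable_norm_pow (p := 2) (by norm_num)
  have hinner : ∀ y : E, ∫ w, ‖a • y + b • w‖ ^ 2 ∂ν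
      = a ^ 2 * ‖y‖ ^ 2 + b ^ 2 * ∫ w, ‖w‖ ^ 2 ∂ν := by
    intro y
    have hexp : ∀ w : E, ‖a • y + b • w‖ ^ 2
        = a ^ 2 * ‖y‖ ^ 2 + 2 * a * b * inner ℝ y w + b ^ 2 * ‖w‖ ^ 2 := by
      intro w
      rw [norm_add_sq_real, norm_smul, norm_smul, mul_pow, mul_pow, real_inner_smul_left,
        real_inner_smul_right, Real.norm_eq_abs, Real.norm_eq_abs, sq_abs, sq_abs]
      ring
    simp_rw [hexp]
    have hi : Integrable (fun w : E => 2 * a * b * inner ℝ y w) ν :=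
      (hwint.const_inner y).const_mul _
    have hi' : Integrable (fun w : E => a ^ 2 * ‖y‖ ^ 2 + 2 * a * b * inner ℝ y w) ν :=
      (integrable_const _).add hi
    rw [integral_add hi' (hw2.const_mul _),
      integral_add (integrable_const _) hi, integral_const_mul (2 * a * b),
      integral_inner hwint, hmean, integral_const_mul (b ^ 2)]
    simp
  rw [integral_prod _ (by simpa using hsum)]
  simp_rw [hinner]
  rw [integral_add (hY2.const_mul _) (integrable_const _), integral_const_mul]
  simp

/-- With `T = 0` the iteration is the exponential moving average of the noise, whose second moment
is of order `α`. -/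
theorem moment_noise_average [IsProbabilityMeasure ν] (hν : MemLp id 2 ν)
    (hmean : ∫ x, x ∂ν = 0) (hα0 : 0 ≤ α) (hα1 : α ≤ 1) (n : ℕ) :
    MemLp (fun ω => backIter (saMap (fun _ : E => (0 : E)) α) n 0 ω) 2
      (Measure.infinitePi fun _ => ν) ∧
    ∫ ω, ‖backIter (saMap (fun _ : E => (0 : E)) α) n 0 ω‖ ^ 2 ∂(Measure.infinitePi fun _ => ν)
      ≤ α * ∫ w, ‖w‖ ^ 2 ∂ν := by
  have hσ : 0 ≤ ∫ w, ‖w‖ ^ 2 ∂ν := integral_nonneg fun w => by positivity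
  induction n with
  | zero =>
    refine ⟨MemLp.zero', ?_⟩
    simpa [backIter] using mul_nonneg hα0 hσ
  | succ n ih =>
    obtain ⟨ihm, ihb⟩ := ih
    set Y := fun ω : ℕ → E => backIter (saMap (fun _ : E => (0 : E)) α) n 0 ω with hYdef
    have hMP := measurePreserving_shift_eval_zero ν
    have hstep : (fun ω : ℕ → E => backIter (saMap (fun _ : E => (0 : E)) α) (n + 1) 0 ω)
        = (fun p : (ℕ → E) × E => (1 - α) • Y p.1 + α • p.2)
          ∘ fun ω : ℕ → E => ((fun k => ω (k + 1)), ω 0) := by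
      funext ω
      simp only [backIter, saMap, Function.comp, Y]
      module
    have hmem : MemLp (fun p : (ℕ → E) × E => (1 - α) • Y p.1 + α • p.2) 2
        ((Measure.infinitePi fun _ => ν).prod ν) :=
      ((ihm.comp_measurePreserving measurePreserving_fst).const_smul (1 - α)).add
        (MemLp.const_smul (hν.comp_measurePreserving measurePreserving_snd) α)
    refine ⟨hstep ▸ hmem.comp_measurePreserving hMP, ?_⟩
    have hint : ∫ ω, ‖backIter (saMap (fun _ : E => (0 : E)) α) (n + 1) 0 ω‖ ^ 2
          ∂(Measure.infinitePi fun _ => ν)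
        = ∫ p, ‖(1 - α) • Y p.1 + α • p.2‖ ^ 2 ∂((Measure.infinitePi fun _ => ν).prod ν) := by
      rw [← hMP.integral_comp_of_aestronglyMeasurable
        (g := fun p : (ℕ → E) × E => ‖(1 - α) • Y p.1 + α • p.2‖ ^ 2)
        (hmem.aestronglyMeasurable.norm.pow 2)]
      exact integral_congr_ae (ae_of_all _ fun ω =>
        congrArg (fun y => ‖y‖ ^ 2) (congrFun hstep ω))
    rw [hint, integral_norm_add_sq_prod ihm hν hmean]
    have h1 : (1 - α) ^ 2 ≤ 1 - α := by nlinarith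
    calc _ ≤ (1 - α) ^ 2 * (α * ∫ w, ‖w‖ ^ 2 ∂ν) + α ^ 2 * ∫ w, ‖w‖ ^ 2 ∂ν := by
          gcongr
      _ ≤ (1 - α) * (α * ∫ w, ‖w‖ ^ 2 ∂ν) + α ^ 2 * ∫ w, ‖w‖ ^ 2 ∂ν := by
          gcongr
      _ = α * ∫ w, ‖w‖ ^ 2 ∂ν := by ring

variable [BorelSpace E]

theorem measurable_backIter_saMap (hTc : Continuous T) (α : ℝ) (n : ℕ) (x : E) :
    Measurable fun ω : ℕ → E => backIter (saMap T α) n x ω := by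
  have := FiniteDimensional.proper ℝ E
  exact (measurable_backIter (measurable_saMap hTc α) n).comp (measurable_const.prodMk measurable_id)

theorem moment_map_backIter_limit {X : (ℕ → E) → E} (hX : Measurable X)
    (hTc : Continuous T) (hlim : ∀ᵐ ω ∂(Measure.infinitePi fun _ => ν),
      Tendsto (fun n => backIter (saMap T α) n θstar ω) atTop (𝓝 (X ω))) {M : ℝ} (hM : 0 ≤ M)
    (hbound : ∀ n, ∫⁻ ω, ENNReal.ofReal (‖backIter (saMap T α) n θstar ω - θstar‖ ^ 2)
        ∂(Measure.infinitePi fun _ => ν) ≤ ENNReal.ofReal M) :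
    Integrable (fun x => ‖x - θstar‖ ^ 2) ((Measure.infinitePi fun _ => ν).map X) ∧
    ∫ x, ‖x - θstar‖ ^ 2 ∂((Measure.infinitePi fun _ => ν).map X) ≤ M := by
  have hfcont : Continuous fun x : E => ‖x - θstar‖ ^ 2 := by fun_prop
  have hlint : ∫⁻ x, ENNReal.ofReal (‖x - θstar‖ ^ 2) ∂((Measure.infinitePi fun _ => ν).map X)
      ≤ ENNReal.ofReal M := by
    rw [lintegral_map (by fun_prop) hX]
    calc _ = ∫⁻ ω, liminf (fun n =>
          ENNReal.ofReal (‖backIter (saMap T α) n θstar ω - θstar‖ ^ 2)) atTop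
            ∂(Measure.infinitePi fun _ => ν) := by
          refine lintegral_congr_ae ?_
          filter_upwards [hlim] with ω hω
          exact (((ENNReal.continuous_ofReal.comp hfcont).tendsto _).comp hω).liminf_eq.symm
      _ ≤ liminf (fun n => ∫⁻ ω, ENNReal.ofReal (‖backIter (saMap T α) n θstar ω - θstar‖ ^ 2)
            ∂(Measure.infinitePi fun _ => ν)) atTop :=
          lintegral_liminf_le fun n =>
            (ENNReal.continuous_ofReal.comp hfcont).measurable.comp
              (measurable_backIter_saMap hTc α n θstar)
      _ ≤ ENNReal.ofReal M :=
          liminf_le_of_frequently_le' (Frequently.of_forall hbound)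
  have hnn : ∀ μ : Measure E, 0 ≤ᵐ[μ] fun x => ‖x - θstar‖ ^ 2 := fun μ =>
    ae_of_all _ fun x => sq_nonneg ‖x - θstar‖
  refine ⟨⟨hfcont.aestronglyMeasurable, ?_⟩, ?_⟩
  · rw [hasFiniteIntegral_iff_ofReal (hnn _)]
    exact hlint.trans_lt ENNReal.ofReal_lt_top
  · rw [integral_eq_lintegral_of_nonneg_ae (hnn _) hfcont.aestronglyMeasurable]
    exact ENNReal.toReal_le_of_le_ofReal hM hlint

variable [IsProbabilityMeasure ν]

theorem moment_deviation (hc : IsNormLike c) (hγ0 : 0 ≤ γ) (hγ1 : γ < 1)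
    (hT : ∀ x y, c (T x - T y) ≤ γ * c (x - y)) (hfix : T θstar = θstar)
    (hν : MemLp id 2 ν) (hmean : ∫ x, x ∂ν = 0) {K : ℝ} (hcK : ∀ x, c x ≤ K * ‖x‖)
    (hα0 : 0 ≤ α) (hα1 : α ≤ 1) (n : ℕ) :
    Integrable (fun ω => c (backIter (saMap T α) n θstar ω - θstar
      - backIter (saMap (fun _ : E => (0 : E)) α) n 0 ω) ^ 2) (Measure.infinitePi fun _ => ν) ∧
    ∫ ω, c (backIter (saMap T α) n θstar ω - θstar
      - backIter (saMap (fun _ : E => (0 : E)) α) n 0 ω) ^ 2 ∂(Measure.infinitePi fun _ => ν)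
      ≤ (γ / (1 - γ)) ^ 2 * (K ^ 2 * (α * ∫ w, ‖w‖ ^ 2 ∂ν)) := by
  have hσ : 0 ≤ ∫ w, ‖w‖ ^ 2 ∂ν := integral_nonneg fun w => by positivity
  have hTc := continuous_of_c_contraction hc hγ0 hT
  have hs := contraction_factor_nonneg hγ0 hα0 hα1
  have hγ' : 0 < 1 - γ := sub_pos.2 hγ1
  induction n with
  | zero =>
    simp only [backIter, sub_self, hc.map_zero]
    refine ⟨by simp, ?_⟩
    simp only [ne_eq, OfNat.ofNat_ne_zero, not_false_eq_true, zero_pow, integral_zero]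
    positivity
  | succ n ih =>
    obtain ⟨ihi, ihb⟩ := ih
    obtain ⟨hYm, hYb⟩ := moment_noise_average hν hmean hα0 hα1 n
    set P : Measure (ℕ → E) := Measure.infinitePi fun _ => ν
    set A : (ℕ → E) → ℝ := fun ω => c (backIter (saMap T α) n θstar ω - θstar
      - backIter (saMap (fun _ : E => (0 : E)) α) n 0 ω) ^ 2 with hA
    set B : (ℕ → E) → ℝ := fun ω => ‖backIter (saMap (fun _ : E => (0 : E)) α) n 0 ω‖ ^ 2 with hB
    have hBi : Integrable B P := hYm.integrable_norm_pow (p := 2) (by norm_num)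
    let D : (ℕ → E) → ℝ := fun ω => (1 - α * (1 - γ)) * A ω
      + (α * (1 - γ)) * ((γ / (1 - γ)) ^ 2 * (K ^ 2 * B ω))
    have hDi : Integrable D P :=
      (ihi.const_mul _).add (((hBi.const_mul _).const_mul _).const_mul _)
    have hshift := measurePreserving_shift ν
    have hDs : Integrable (fun ω => D fun k => ω (k + 1)) P :=
      hshift.integrable_comp_of_integrable hDi
    have hle : ∀ ω : ℕ → E, c (backIter (saMap T α) (n + 1) θstar ω - θstar
        - backIter (saMap (fun _ : E => (0 : E)) α) (n + 1) 0 ω) ^ 2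
          ≤ D fun k => ω (k + 1) := by
      intro ω
      refine (c_deviation_sq_le hc hγ0 hγ1 hT hfix hα0 hα1 _ _ _).trans ?_
      simp only [D, hA, hB, ← mul_pow]
      have hcy := hc.nonneg (backIter (saMap (fun _ : E => (0 : E)) α) n 0 fun k => ω (k + 1))
      gcongr
      exact hcK _
    have hmeas : Measurable fun ω : ℕ → E => c (backIter (saMap T α) (n + 1) θstar ω - θstar
        - backIter (saMap (fun _ : E => (0 : E)) α) (n + 1) 0 ω) ^ 2 := by
      have := FiniteDimensional.proper ℝ E
      exact (hc.continuous.measurable.comp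
        (((measurable_backIter_saMap hTc α (n + 1) θstar).sub_const θstar).sub
          (measurable_backIter_saMap continuous_const α (n + 1) 0))).pow_const 2
    have hint := hDs.mono' hmeas.aestronglyMeasurable (ae_of_all _ fun ω => by
      rw [Real.norm_of_nonneg (sq_nonneg _)]
      exact hle ω)
    refine ⟨hint, (integral_mono hint hDs hle).trans ?_⟩
    have hDshift : ∫ ω, D (fun k => ω (k + 1)) ∂P = ∫ ω, D ω ∂P :=
      hshift.integral_comp_of_aestronglyMeasurable hDi.aestronglyMeasurable
    rw [hDshift, integral_add (ihi.const_mul _) (((hBi.const_mul _).const_mul _).const_mul _),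
      integral_const_mul, integral_const_mul, integral_const_mul, integral_const_mul]
    calc _ ≤ (1 - α * (1 - γ)) * ((γ / (1 - γ)) ^ 2 * (K ^ 2 * (α * ∫ w, ‖w‖ ^ 2 ∂ν)))
          + α * (1 - γ) * ((γ / (1 - γ)) ^ 2 * (K ^ 2 * (α * ∫ w, ‖w‖ ^ 2 ∂ν))) := by
          gcongr
      _ = _ := by ring

theorem exists_moment_backIter_le (hc : IsNormLike c) (hγ0 : 0 ≤ γ) (hγ1 : γ < 1)
    (hT : ∀ x y, c (T x - T y) ≤ γ * c (x - y)) (hfix : T θstar = θstar)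
    (hν : MemLp id 2 ν) (hmean : ∫ x, x ∂ν = 0) :
    ∃ C > 0, ∀ α : ℝ, 0 ≤ α → α ≤ 1 → ∀ n,
      ∫⁻ ω, ENNReal.ofReal (‖backIter (saMap T α) n θstar ω - θstar‖ ^ 2)
        ∂(Measure.infinitePi fun _ => ν) ≤ ENNReal.ofReal (C * α) := by
  obtain ⟨K, hK, hcK⟩ := hc.exists_le_norm
  obtain ⟨k, hk, hck⟩ := hc.exists_norm_le
  have hσ : 0 ≤ ∫ w, ‖w‖ ^ 2 ∂ν := integral_nonneg fun w => by positivity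
  set σ := ∫ w, ‖w‖ ^ 2 ∂ν
  refine ⟨k ^ 2 * (2 * ((γ / (1 - γ)) ^ 2 * (K ^ 2 * σ)) + 2 * (K ^ 2 * σ)) + 1, by positivity,
    fun α hα0 hα1 n => ?_⟩
  obtain ⟨hYm, hYb⟩ := moment_noise_average hν hmean hα0 hα1 n
  obtain ⟨hZi, hZb⟩ := moment_deviation hc hγ0 hγ1 hT hfix hν hmean hcK hα0 hα1 n
  have hYi := hYm.integrable_norm_pow (p := 2) (by norm_num)
  set P : Measure (ℕ → E) := Measure.infinitePi fun _ => ν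
  set X : (ℕ → E) → E := fun ω => backIter (saMap T α) n θstar ω
  set Y : (ℕ → E) → E := fun ω => backIter (saMap (fun _ : E => (0 : E)) α) n 0 ω
  have hbound : ∀ ω, ‖X ω - θstar‖ ^ 2
      ≤ k ^ 2 * (2 * c (X ω - θstar - Y ω) ^ 2 + 2 * (K ^ 2 * ‖Y ω‖ ^ 2)) := by
    intro ω
    have h1 := pow_le_pow_left₀ (norm_nonneg _) (hck (X ω - θstar)) 2
    have h2 := hc.map_add_sq_le (X ω - θstar - Y ω) (Y ω)
    have h3 := pow_le_pow_left₀ (hc.nonneg _) (hcK (Y ω)) 2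
    rw [sub_add_cancel] at h2
    rw [mul_pow] at h1 h3
    refine h1.trans (mul_le_mul_of_nonneg_left ?_ (sq_nonneg k))
    linarith
  have hint : Integrable (fun ω => k ^ 2 * (2 * c (X ω - θstar - Y ω) ^ 2
      + 2 * (K ^ 2 * ‖Y ω‖ ^ 2))) P :=
    ((hZi.const_mul 2).add ((hYi.const_mul _).const_mul 2)).const_mul _
  refine (lintegral_mono fun ω => ENNReal.ofReal_le_ofReal (hbound ω)).trans ?_
  rw [← ofReal_integral_eq_lintegral_ofReal hint (ae_of_all _ fun ω => by positivity)]
  refine ENNReal.ofReal_le_ofReal ?_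
  rw [integral_const_mul, integral_add (hZi.const_mul 2) ((hYi.const_mul _).const_mul 2),
    integral_const_mul, integral_const_mul, integral_const_mul]
  calc _ ≤ k ^ 2 * (2 * ((γ / (1 - γ)) ^ 2 * (K ^ 2 * (α * σ))) + 2 * (K ^ 2 * (α * σ))) := by
        gcongr
    _ = k ^ 2 * (2 * ((γ / (1 - γ)) ^ 2 * (K ^ 2 * σ)) + 2 * (K ^ 2 * σ)) * α := by ring
    _ ≤ _ := by gcongr; linarith

theorem exists_backIter_limit (hc : IsNormLike c) (hγ0 : 0 ≤ γ) (hγ1 : γ < 1)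
    (hT : ∀ x y, c (T x - T y) ≤ γ * c (x - y)) (hfix : T θstar = θstar)
    (hν : Integrable (fun x : E => x) ν) (hα0 : 0 < α) (hα1 : α ≤ 1) :
    ∃ X : (ℕ → E) → E, Measurable X ∧ ∀ᵐ ω ∂(Measure.infinitePi fun _ => ν),
      Tendsto (fun n => backIter (saMap T α) n θstar ω) atTop (𝓝 (X ω)) := by
  have := FiniteDimensional.complete ℝ E
  have hTc := continuous_of_c_contraction hc hγ0 hT
  obtain ⟨K, hK, hcK⟩ := hc.exists_le_norm
  obtain ⟨k, hk, hck⟩ := hc.exists_norm_le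
  have hs := contraction_factor_nonneg hγ0 hα0.le hα1
  have hs1 : 1 - α * (1 - γ) < 1 := by nlinarith [mul_pos hα0 (sub_pos.2 hγ1)]
  set r := 1 - α * (1 - γ)
  refine measurable_limit_of_tendsto_metrizable_ae
    (fun n => (measurable_backIter_saMap hTc α n θstar).aemeasurable) ?_
  have hsum : ∀ᵐ ω ∂(Measure.infinitePi fun _ : ℕ => ν),
      ∑' n, ENNReal.ofReal (r ^ n) * ‖ω n‖ₑ < ∞ := by
    refine ae_lt_top (by fun_prop) ?_
    have hmeas : ∀ n : ℕ, Measurable fun ω : ℕ → E => ENNReal.ofReal (r ^ n) * ‖ω n‖ₑ :=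
      fun n => by fun_prop
    rw [lintegral_tsum fun n => (hmeas n).aemeasurable]
    have hterm : ∀ n : ℕ, ∫⁻ ω : ℕ → E, ENNReal.ofReal (r ^ n) * ‖ω n‖ₑ
        ∂(Measure.infinitePi fun _ => ν) = ENNReal.ofReal (r ^ n) * ∫⁻ w, ‖w‖ₑ ∂ν := by
      intro n
      rw [lintegral_const_mul _ (by fun_prop)]
      congr 1
      exact (measurePreserving_eval_infinitePi (fun _ : ℕ => ν) n).lintegral_comp
        (f := fun w : E => ‖w‖ₑ) measurable_enorm
    simp_rw [hterm]
    rw [ENNReal.tsum_mul_right]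
    refine ENNReal.mul_ne_top ?_ hν.hasFiniteIntegral.ne
    rw [← ENNReal.ofReal_tsum_of_nonneg (fun n => pow_nonneg hs n)
      (summable_geometric_of_lt_one hs hs1)]
    exact ENNReal.ofReal_ne_top
  filter_upwards [hsum] with ω hω
  refine cauchySeq_tendsto_of_complete (cauchySeq_of_edist_le_of_tsum_ne_top
    (fun n => ENNReal.ofReal (k * (α * K)) * (ENNReal.ofReal (r ^ n) * ‖ω n‖ₑ)) (fun n => ?_) ?_)
  · rw [edist_comm, edist_dist, dist_eq_norm, ← ofReal_norm,
      ← ENNReal.ofReal_mul (pow_nonneg hs n), ← ENNReal.ofReal_mul (by positivity)]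
    refine ENNReal.ofReal_le_ofReal ((hck _).trans ?_)
    have h := c_backIter_saMap_succ_sub_le hc hγ0 hT hα0.le hα1 hfix n ω
    have h2 : r ^ n * (α * c (ω n)) ≤ r ^ n * (α * (K * ‖ω n‖)) := by
      gcongr
      exact hcK _
    calc _ ≤ k * (r ^ n * (α * (K * ‖ω n‖))) := mul_le_mul_of_nonneg_left (h.trans h2) hk.le
      _ = _ := by ring
  · rw [ENNReal.tsum_mul_left]
    exact ENNReal.mul_ne_top ENNReal.ofReal_ne_top hω.ne

theorem map_backIter_limit_stationary (hTc : Continuous T) {X : (ℕ → E) → E}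
    (hX : Measurable X) (hlim : ∀ᵐ ω ∂(Measure.infinitePi fun _ => ν),
      Tendsto (fun n => backIter (saMap T α) n θstar ω) atTop (𝓝 (X ω))) :
    (((Measure.infinitePi fun _ => ν).map X).prod ν).map (fun p => saMap T α p.1 p.2)
      = (Measure.infinitePi fun _ => ν).map X := by
  have := FiniteDimensional.proper ℝ E
  have hprob : IsProbabilityMeasure ((Measure.infinitePi fun _ : ℕ => ν).map X) :=
    Measure.isProbabilityMeasure_map hX.aemeasurable
  have hMP := ((measurable_saMap hTc α).measurePreserving
    (((Measure.infinitePi fun _ => ν).map X).prod ν)).comp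
    (((hX.measurePreserving (Measure.infinitePi fun _ => ν)).prod (MeasurePreserving.id ν)).comp
      (measurePreserving_shift_eval_zero ν))
  rw [← hMP.map_eq]
  refine Measure.map_congr ?_
  filter_upwards [hlim, (measurePreserving_shift ν).quasiMeasurePreserving.ae hlim] with ω h h'
  refine tendsto_nhds_unique ?_ ((tendsto_add_atTop_iff_nat 1).2 h)
  have hcont : Continuous fun x => saMap T α x (ω 0) := by unfold saMap; fun_prop
  exact (hcont.tendsto _).comp h'

theorem eq_map_backIter_limit_of_stationary (hc : IsNormLike c) (hγ0 : 0 ≤ γ) (hγ1 : γ < 1)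
    (hT : ∀ x y, c (T x - T y) ≤ γ * c (x - y)) (hα0 : 0 < α) (hα1 : α ≤ 1) {X : (ℕ → E) → E}
    (hX : Measurable X) (hlim : ∀ᵐ ω ∂(Measure.infinitePi fun _ => ν),
      Tendsto (fun n => backIter (saMap T α) n θstar ω) atTop (𝓝 (X ω)))
    {μ : Measure E} [IsProbabilityMeasure μ]
    (hμ : (μ.prod ν).map (fun p => saMap T α p.1 p.2) = μ) :
    μ = (Measure.infinitePi fun _ => ν).map X := by
  have := FiniteDimensional.proper ℝ E
  have hTc := continuous_of_c_contraction hc hγ0 hT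
  obtain ⟨k, hk, hck⟩ := hc.exists_norm_le
  have hs := contraction_factor_nonneg hγ0 hα0.le hα1
  have hs1 : 1 - α * (1 - γ) < 1 := by nlinarith [mul_pos hα0 (sub_pos.2 hγ1)]
  have hprob : IsProbabilityMeasure ((Measure.infinitePi fun _ : ℕ => ν).map X) :=
    Measure.isProbabilityMeasure_map hX.aemeasurable
  set P : Measure (ℕ → E) := Measure.infinitePi fun _ => ν with hP
  refine ext_of_forall_integral_eq_of_IsFiniteMeasure fun f => ?_
  have hMP : ∀ n, MeasurePreserving (fun p : E × (ℕ → E) => backIter (saMap T α) n p.1 p.2)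
      (μ.prod P) μ := fun n => by
    have h := measurePreserving_backIter (measurable_saMap hTc α) ν μ n
    rwa [Function.iterate_fixed (f := fun ρ : Measure E =>
      (ρ.prod ν).map fun p => saMap T α p.1 p.2) hμ n] at h
  have hconst : ∀ n, ∫ p, f (backIter (saMap T α) n p.1 p.2) ∂(μ.prod P) = ∫ x, f x ∂μ :=
    fun n => (hMP n).integral_comp_of_aestronglyMeasurable f.continuous.aestronglyMeasurable
  have hlim' : Tendsto (fun n => ∫ p, f (backIter (saMap T α) n p.1 p.2) ∂(μ.prod P)) atTop
      (𝓝 (∫ p : E × (ℕ → E), f (X p.2) ∂(μ.prod P))) := by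
    refine tendsto_integral_of_dominated_convergence (fun _ => ‖f‖)
      (fun n => (f.continuous.measurable.comp (hMP n).measurable).aestronglyMeasurable)
      (integrable_const _) (fun n => ae_of_all _ fun p => f.norm_coe_le_norm _) ?_
    have hsnd : ∀ᵐ p ∂(μ.prod P), Tendsto (fun n => backIter (saMap T α) n θstar p.2) atTop
        (𝓝 (X p.2)) := measurePreserving_snd.quasiMeasurePreserving.ae hlim
    filter_upwards [hsnd] with p hp
    refine (f.continuous.tendsto _).comp ?_
    have hdiff : Tendsto (fun n => backIter (saMap T α) n p.1 p.2
        - backIter (saMap T α) n θstar p.2) atTop (𝓝 0) := by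
      refine squeeze_zero_norm (a := fun n => k * ((1 - α * (1 - γ)) ^ n * c (p.1 - θstar)))
        (fun n => (hck _).trans (mul_le_mul_of_nonneg_left
          (c_backIter_saMap_sub_le hc hγ0 hT hα0.le hα1 n _ _ _) hk.le)) ?_
      simpa using ((tendsto_pow_atTop_nhds_zero_of_lt_one hs hs1).mul_const
        (c (p.1 - θstar))).const_mul k
    simpa using hdiff.add hp
  have hXint : ∫ p : E × (ℕ → E), f (X p.2) ∂(μ.prod P) = ∫ x, f x ∂(P.map X) :=
    ((hX.measurePreserving P).comp measurePreserving_snd).integral_comp_of_aestronglyMeasurable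
      f.continuous.aestronglyMeasurable
  simp_rw [hconst, hXint] at hlim'
  exact tendsto_nhds_unique tendsto_const_nhds hlim'

/-- The synchronous coupling of two copies of the iteration contracts `∫ c (x - y) ^ 2`. -/
theorem W2sq_iterate_le (hc : IsNormLike c) (hγ0 : 0 ≤ γ)
    (hT : ∀ x y, c (T x - T y) ≤ γ * c (x - y)) (hα0 : 0 ≤ α) (hα1 : α ≤ 1)
    {μ μ' : Measure E} [IsProbabilityMeasure μ] [IsProbabilityMeasure μ']
    (hμ' : (μ'.prod ν).map (fun p => saMap T α p.1 p.2) = μ')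
    (hint : Integrable (fun x => c (x - θstar) ^ 2) μ)
    (hint' : Integrable (fun x => c (x - θstar) ^ 2) μ') (n : ℕ) :
    W2sq c ((fun ρ : Measure E => (ρ.prod ν).map fun p => saMap T α p.1 p.2)^[n] μ) μ'
      ≤ ((1 - α * (1 - γ)) ^ n) ^ 2
        * (2 * ∫ x, c (x - θstar) ^ 2 ∂μ + 2 * ∫ x, c (x - θstar) ^ 2 ∂μ') := by
  have := FiniteDimensional.proper ℝ E
  have hTc := continuous_of_c_contraction hc hγ0 hT
  have hs := contraction_factor_nonneg hγ0 hα0 hα1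
  set P : Measure (ℕ → E) := Measure.infinitePi fun _ => ν with hP
  let Φ : (E × E) × (ℕ → E) → E × E := fun q =>
    (backIter (saMap T α) n q.1.1 q.2, backIter (saMap T α) n q.1.2 q.2)
  have h1 := (measurePreserving_backIter (measurable_saMap hTc α) ν μ n).comp
    ((measurePreserving_fst (μ := μ) (ν := μ')).prod (MeasurePreserving.id P))
  have h2 := (measurePreserving_backIter (measurable_saMap hTc α) ν μ' n).comp
    ((measurePreserving_snd (μ := μ) (ν := μ')).prod (MeasurePreserving.id P))
  rw [Function.iterate_fixed (f := fun ρ : Measure E =>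
      (ρ.prod ν).map fun p => saMap T α p.1 p.2) hμ' n] at h2
  have hΦ : Measurable Φ := h1.measurable.prodMk h2.measurable
  have hcoup : IsCoupling (((μ.prod μ').prod P).map Φ)
      ((fun ρ : Measure E => (ρ.prod ν).map fun p => saMap T α p.1 p.2)^[n] μ) μ' := by
    refine ⟨?_, ?_⟩
    · rw [Measure.map_map measurable_fst hΦ]; exact h1.map_eq
    · rw [Measure.map_map measurable_snd hΦ]; exact h2.map_eq
  have hgcont : Continuous fun p : E × E => c (p.1 - p.2) ^ 2 :=
    (hc.continuous.comp (continuous_fst.sub continuous_snd)).pow 2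
  have hΦMP := hΦ.measurePreserving ((μ.prod μ').prod P)
  let D : E × E → ℝ := fun p => ((1 - α * (1 - γ)) ^ n) ^ 2
      * (2 * c (p.1 - θstar) ^ 2 + 2 * c (p.2 - θstar) ^ 2)
  have hi1 : Integrable (fun p : E × E => c (p.1 - θstar) ^ 2) (μ.prod μ') := hint.comp_fst μ'
  have hi2 : Integrable (fun p : E × E => c (p.2 - θstar) ^ 2) (μ.prod μ') := hint'.comp_snd μ
  have hD : Integrable D (μ.prod μ') := ((hi1.const_mul 2).add (hi2.const_mul 2)).const_mul _
  have hDP : Integrable (fun q : (E × E) × (ℕ → E) => D q.1) ((μ.prod μ').prod P) := hD.comp_fst P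
  have hle : ∀ q, c ((Φ q).1 - (Φ q).2) ^ 2 ≤ D q.1 := by
    intro q
    refine (pow_le_pow_left₀ (hc.nonneg _)
      (c_backIter_saMap_sub_le hc hγ0 hT hα0 hα1 n q.1.1 q.1.2 q.2) 2).trans ?_
    rw [mul_pow]
    refine mul_le_mul_of_nonneg_left ?_ (sq_nonneg _)
    simpa using hc.map_sub_sq_le (q.1.1 - θstar) (q.1.2 - θstar)
  have hΦint : Integrable (fun q => c ((Φ q).1 - (Φ q).2) ^ 2) ((μ.prod μ').prod P) :=
    hDP.mono' (hgcont.measurable.comp hΦ).aestronglyMeasurable (ae_of_all _ fun q => by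
      rw [Real.norm_of_nonneg (sq_nonneg _)]
      exact hle q)
  have hbdd : BddBelow { r : ℝ | ∃ π : Measure (E × E), IsCoupling π
      ((fun ρ : Measure E => (ρ.prod ν).map fun p => saMap T α p.1 p.2)^[n] μ) μ' ∧
      Integrable (fun p => (c (p.1 - p.2)) ^ 2) π ∧ r = ∫ p, (c (p.1 - p.2)) ^ 2 ∂π } := by
    refine ⟨0, ?_⟩
    rintro r ⟨π, -, -, rfl⟩
    exact integral_nonneg fun p => sq_nonneg _
  refine (csInf_le hbdd ⟨_, hcoup,
    (integrable_map_measure hgcont.aestronglyMeasurable hΦ.aemeasurable).2 hΦint, rfl⟩).trans ?_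
  rw [← hΦMP.integral_comp_of_aestronglyMeasurable hgcont.aestronglyMeasurable]
  refine (integral_mono hΦint hDP hle).trans_eq ?_
  rw [measurePreserving_fst.integral_comp_of_aestronglyMeasurable hD.aestronglyMeasurable,
    integral_const_mul, integral_add (hi1.const_mul 2) (hi2.const_mul 2), integral_const_mul,
    integral_const_mul,
    measurePreserving_fst.integral_comp_of_aestronglyMeasurable hint.aestronglyMeasurable,
    measurePreserving_snd.integral_comp_of_aestronglyMeasurable hint'.aestronglyMeasurable]

end StochasticApproximation

theorem stmt_4 {d : ℕ} (γ : ℝ) (hγ : γ ∈ Set.Ioo (0:ℝ) 1)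
    (c : EuclideanSpace ℝ (Fin d) → ℝ) (hc : IsNormLike c)
    (T : EuclideanSpace ℝ (Fin d) → EuclideanSpace ℝ (Fin d))
    (hT : ∀ θ θ', c (T θ - T θ') ≤ γ * c (θ - θ'))
    (θstar : EuclideanSpace ℝ (Fin d)) (hfix : T θstar = θstar)
    (νw : Measure (EuclideanSpace ℝ (Fin d))) [IsProbabilityMeasure νw]
    (hνint : Integrable (fun x : EuclideanSpace ℝ (Fin d) => x) νw)
    (hνmean : ∫ x, x ∂νw = 0)
    (hν2 : Integrable (fun x : EuclideanSpace ℝ (Fin d) => ‖x‖ ^ 2) νw) :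
    ∃ ᾱ' > 0, ∃ μstat : ℝ → Measure (EuclideanSpace ℝ (Fin d)),
      (∀ α ∈ Set.Ioc (0:ℝ) ᾱ',
        (IsProbabilityMeasure (μstat α) ∧
          Integrable (fun x : EuclideanSpace ℝ (Fin d) => ‖x‖ ^ 2) (μstat α) ∧
          saStep T α νw (μstat α) = μstat α) ∧
        (∀ μ' : Measure (EuclideanSpace ℝ (Fin d)), IsProbabilityMeasure μ' →
          Integrable (fun x : EuclideanSpace ℝ (Fin d) => ‖x‖ ^ 2) μ' →
          saStep T α νw μ' = μ' → μ' = μstat α)) ∧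
      (∀ μ₀ : Measure (EuclideanSpace ℝ (Fin d)), IsProbabilityMeasure μ₀ →
        Integrable (fun x : EuclideanSpace ℝ (Fin d) => ‖x‖ ^ 2) μ₀ →
        ∃ C > 0, ∀ α ∈ Set.Ioc (0:ℝ) ᾱ', ∀ t : ℕ,
          W2sq c ((saStep T α νw)^[t] μ₀) (μstat α) ≤
            C * (1 - α * (1 - Real.sqrt γ)) ^ t) ∧
      (∃ C > 0, ∀ α ∈ Set.Ioc (0:ℝ) ᾱ',
        ∫ x, ‖x - θstar‖ ^ 2 ∂(μstat α) ≤ C * α) := by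
  obtain ⟨hγ0, hγ1⟩ := hγ
  have hTc := continuous_of_c_contraction hc hγ0.le hT
  have hν : MemLp id 2 νw :=
    (memLp_two_iff_integrable_sq_norm hνint.aestronglyMeasurable).2 hν2
  obtain ⟨K, hK, hcK⟩ := hc.exists_le_norm
  obtain ⟨C, hC, hCb⟩ := exists_moment_backIter_le hc hγ0.le hγ1 hT hfix hν hνmean
  have hex : ∀ α : ℝ, ∃ X : (ℕ → EuclideanSpace ℝ (Fin d)) → EuclideanSpace ℝ (Fin d),
      α ∈ Set.Ioc (0 : ℝ) 1 → Measurable X ∧ ∀ᵐ ω ∂(Measure.infinitePi fun _ => νw),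
        Tendsto (fun n => backIter (saMap T α) n θstar ω) atTop (𝓝 (X ω)) := by
    intro α
    by_cases hα : α ∈ Set.Ioc (0 : ℝ) 1
    · obtain ⟨X, hX⟩ := exists_backIter_limit hc hγ0.le hγ1 hT hfix hνint hα.1 hα.2
      exact ⟨X, fun _ => hX⟩
    · exact ⟨fun _ => 0, fun h => absurd h hα⟩
  choose X hX using hex
  have hprob : ∀ α ∈ Set.Ioc (0 : ℝ) 1,
      IsProbabilityMeasure ((Measure.infinitePi fun _ => νw).map (X α)) := fun α hα =>
    Measure.isProbabilityMeasure_map (hX α hα).1.aemeasurable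
  have hmom : ∀ α ∈ Set.Ioc (0 : ℝ) 1, _ ∧ _ := fun α hα =>
    moment_map_backIter_limit (hX α hα).1 hTc (hX α hα).2 (mul_nonneg hC.le hα.1.le)
      (hCb α hα.1.le hα.2)
  have hstat : ∀ α ∈ Set.Ioc (0 : ℝ) 1, _ = _ := fun α hα =>
    map_backIter_limit_stationary hTc (hX α hα).1 (hX α hα).2
  have hcsq : ∀ x, c (x - θstar) ^ 2 ≤ K ^ 2 * ‖x - θstar‖ ^ 2 := fun x => by
    rw [← mul_pow]
    exact pow_le_pow_left₀ (hc.nonneg _) (hcK _) 2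
  have hcint : ∀ μ : Measure (EuclideanSpace ℝ (Fin d)),
      Integrable (fun x => ‖x - θstar‖ ^ 2) μ → Integrable (fun x => c (x - θstar) ^ 2) μ :=
    fun μ h => (h.const_mul (K ^ 2)).mono'
      ((hc.continuous.comp (continuous_id.sub continuous_const)).pow 2).aestronglyMeasurable
      (ae_of_all _ fun x => by
        rw [Real.norm_of_nonneg (sq_nonneg _)]
        exact hcsq x)
  refine ⟨1, one_pos, fun α => (Measure.infinitePi fun _ => νw).map (X α),
    fun α hα => ⟨⟨hprob α hα, ?_, hstat α hα⟩, fun μ' hμ' _ hfixμ' => ?_⟩,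
    fun μ₀ hμ₀ hμ₀2 => ?_, C, hC, fun α hα => (hmom α hα).2⟩
  · have := hprob α hα
    simpa using integrable_norm_sub_sq (hmom α hα).1 0
  · exact eq_map_backIter_limit_of_stationary hc hγ0.le hγ1 hT hα.1 hα.2 (hX α hα).1 (hX α hα).2
      hfixμ'
  · have hint₀ : Integrable (fun x => c (x - θstar) ^ 2) μ₀ :=
      hcint _ (integrable_norm_sub_sq (a := 0) (by simpa using hμ₀2) θstar)
    have hM₀ : 0 ≤ ∫ x, c (x - θstar) ^ 2 ∂μ₀ := integral_nonneg fun x => sq_nonneg _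
    refine ⟨2 * ∫ x, c (x - θstar) ^ 2 ∂μ₀ + 2 * (K ^ 2 * C), by positivity, fun α hα t => ?_⟩
    have := hprob α hα
    have hint := hcint _ (hmom α hα).1
    refine (W2sq_iterate_le hc hγ0.le hT hα.1.le hα.2 (hstat α hα) hint₀ hint t).trans ?_
    have hM : ∫ x, c (x - θstar) ^ 2 ∂((Measure.infinitePi fun _ => νw).map (X α))
        ≤ K ^ 2 * C := by
      refine (integral_mono hint ((hmom α hα).1.const_mul (K ^ 2)) hcsq).trans ?_
      rw [integral_const_mul]
      gcongr
      exact (hmom α hα).2.trans (mul_le_of_le_one_right hC.le hα.2)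
    have hs := contraction_factor_nonneg hγ0.le hα.1.le hα.2
    have hs1 : 1 - α * (1 - γ) ≤ 1 := by
      linarith [mul_pos hα.1 (sub_pos.2 hγ1)]
    have hsqrt : γ ≤ Real.sqrt γ := Real.le_sqrt_of_sq_le (by nlinarith)
    have hrate : ((1 - α * (1 - γ)) ^ t) ^ 2 ≤ (1 - α * (1 - Real.sqrt γ)) ^ t := by
      rw [← pow_mul, mul_comm t 2, pow_mul]
      refine pow_le_pow_left₀ (sq_nonneg _) ?_ t
      nlinarith [mul_le_mul_of_nonneg_left hsqrt hα.1.le]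
    rw [mul_comm]
    gcongr
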